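/- For n ≥ 2, let f_{P_n}(q) ∈ ℤ[[q]] be the formal power series whose coefficient of q^m is the number of order-reversing maps σ : P_n → ℕ with Σ_{a ∈ P_n} σ(a) = m, where P_n is the 2-rowed poset with double diagonals. Then f_{P_n}(q) · ∏_{k=1}^{2n} (1 − q^k) = ∏_{k=1}^{n−1} (1 + q^{2k}) as an identity of formal power series in ℤ[[q]]. -/

import Mathlib

/-- The generating relations of the 2-rowed poset with double diagonals `P_n`,
on the labels `1, …, 2n` (as natural numbers): `1 < 2`, `1 < 3`;
`2k < 2k+2`, `2k < 2k+3`, `2k+1 < 2k+2`, `2k+1 < 2k+3` for `1 ≤ k ≤ n-2`;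
and `2n-2 < 2n`, `2n-1 < 2n`. -/
def prel (n : ℕ) (i j : ℕ) : Prop :=
  (i = 1 ∧ (j = 2 ∨ j = 3)) ∨
  (∃ k, 1 ≤ k ∧ k ≤ n - 2 ∧ (i = 2 * k ∨ i = 2 * k + 1) ∧
    (j = 2 * k + 2 ∨ j = 2 * k + 3)) ∨
  ((i = 2 * n - 2 ∨ i = 2 * n - 1) ∧ j = 2 * n)

/-- The order of `P_n` generated by the relations `prel n`. -/
def pOrd (n : ℕ) : ℕ → ℕ → Prop := Relation.ReflTransGen (prel n)

/-- `f_{P_n}(q)`: the coefficient of `q^m` is the number of order-reversing maps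
`σ : P_n → ℕ` with `Σ_{a ∈ P_n} σ(a) = m`.  Here the element with label `i+1`
of `P_n` is represented by `i : Fin (2n)`. -/
noncomputable def fPq (n : ℕ) : PowerSeries ℤ :=
  PowerSeries.mk fun m =>
    (({σ : Fin (2 * n) → ℕ |
        (∀ i j : Fin (2 * n), pOrd n ((i : ℕ) + 1) ((j : ℕ) + 1) → σ j ≤ σ i) ∧
        ∑ a, σ a = m}).ncard : ℤ)

theorem prel.half_lt {n a b : ℕ} (hn : 1 ≤ n) (h : prel n a b) : a / 2 < b / 2 := by
  rcases h with h | ⟨k, h⟩ | h <;> omega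

theorem prel_of_half_eq {n a b : ℕ} (ha : 1 ≤ a) (hb : b ≤ 2 * n) (h : b / 2 = a / 2 + 1) :
    prel n a b := by
  unfold prel
  by_cases h1 : a = 1
  · left; omega
  · right
    by_cases h2 : b = 2 * n
    · right; omega
    · left; exact ⟨a / 2, by omega, by omega, by omega, by omega⟩

theorem pOrd_of_half_lt {n a b : ℕ} (ha : 1 ≤ a) (hb : b ≤ 2 * n) (h : a / 2 < b / 2) :
    pOrd n a b := by
  obtain ⟨d, hd⟩ := Nat.exists_eq_add_of_lt h
  induction d generalizing b with
  | zero => exact Relation.ReflTransGen.single (prel_of_half_eq ha hb hd)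
  | succ d ih =>
    have hc : pOrd n a (2 * (b / 2 - 1)) := ih (by omega) (by omega) (by omega)
    exact Relation.ReflTransGen.tail hc (prel_of_half_eq (by omega) hb (by omega))

theorem pOrd.eq_or_half_lt {n a b : ℕ} (hn : 1 ≤ n) (h : pOrd n a b) : a = b ∨ a / 2 < b / 2 := by
  induction h with
  | refl => exact Or.inl rfl
  | tail _ hbc ih =>
    have := hbc.half_lt hn
    rcases ih with rfl | ih <;> omega

/-- The maps on `Fin N` that are order-reversing when `Fin N` is ordered by stacking the blocks
`{0}, {1, 2}, {3, 4}, …`, each of which is an antichain. -/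
def blockMaps (N : ℕ) : Set (Fin N → ℕ) :=
  {σ | ∀ i j : Fin N, ((i : ℕ) + 1) / 2 < ((j : ℕ) + 1) / 2 → σ j ≤ σ i}

/-- The generating function of a set of tuples by the sum of their entries. -/
noncomputable def sumGF {N : ℕ} (S : Set (Fin N → ℕ)) : PowerSeries ℤ :=
  PowerSeries.mk fun m => (({σ | σ ∈ S ∧ ∑ a, σ a = m}).ncard : ℤ)

theorem fPq_eq_sumGF {n : ℕ} (hn : 1 ≤ n) : fPq n = sumGF (blockMaps (2 * n)) := by
  have key : ∀ σ : Fin (2 * n) → ℕ,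
      (∀ i j : Fin (2 * n), pOrd n ((i : ℕ) + 1) ((j : ℕ) + 1) → σ j ≤ σ i) ↔
        σ ∈ blockMaps (2 * n) := by
    intro σ
    refine ⟨fun h i j hij => h i j (pOrd_of_half_lt (by omega) (by omega) hij),
      fun h i j hij => ?_⟩
    rcases hij.eq_or_half_lt hn with hij | hij
    · rw [Fin.ext (Nat.succ_injective hij)]
    · exact h i j hij
  simp only [fPq, sumGF, key]

theorem finite_sum_eq {N : ℕ} (S : Set (Fin N → ℕ)) (m : ℕ) :
    {σ | σ ∈ S ∧ ∑ a, σ a = m}.Finite :=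
  (Set.finite_Iic (fun _ : Fin N => m)).subset fun _ hσ i =>
    hσ.2 ▸ Finset.single_le_sum (fun _ _ => Nat.zero_le _) (Finset.mem_univ i)

theorem sumGF_union {N : ℕ} {S T : Set (Fin N → ℕ)} (h : Disjoint S T) :
    sumGF (S ∪ T) = sumGF S + sumGF T := by
  ext m
  simp only [sumGF, PowerSeries.coeff_mk, map_add]
  rw [← Nat.cast_add, ← Set.ncard_union_eq _ (finite_sum_eq S m) (finite_sum_eq T m)]
  · congr 2
    ext σ
    simp only [Set.mem_union, Set.mem_ofPred_eq]
    tauto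
  · exact h.mono (fun _ hσ => hσ.1) fun _ hσ => hσ.1

theorem sumGF_image {M N : ℕ} {S : Set (Fin M → ℕ)} {φ : (Fin M → ℕ) → Fin N → ℕ} (c : ℕ)
    (hφ : Function.Injective φ) (hc : ∀ σ, ∑ a, φ σ a = ∑ a, σ a + c) :
    sumGF (φ '' S) = sumGF S * PowerSeries.X ^ c := by
  ext m
  rw [PowerSeries.coeff_mul_X_pow']
  simp only [sumGF, PowerSeries.coeff_mk]
  split_ifs with hm
  · rw [← Set.ncard_image_of_injective _ hφ]
    congr 2
    ext τ
    constructor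
    · rintro ⟨⟨σ, hσ, rfl⟩, h⟩
      rw [hc] at h
      exact ⟨σ, ⟨hσ, by omega⟩, rfl⟩
    · rintro ⟨σ, ⟨hσ, h⟩, rfl⟩
      exact ⟨⟨σ, hσ, rfl⟩, by rw [hc]; omega⟩
  · rw [Nat.cast_eq_zero, Set.ncard_eq_zero (finite_sum_eq _ m), Set.eq_empty_iff_forall_notMem]
    rintro _ ⟨⟨σ, -, rfl⟩, h⟩
    rw [hc] at h
    omega

theorem sumGF_blockMaps_zero : sumGF (blockMaps 0) = 1 := by
  ext m
  rw [sumGF, PowerSeries.coeff_mk, PowerSeries.coeff_one]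
  by_cases hm : m = 0
  · have : {σ | σ ∈ blockMaps 0 ∧ ∑ a, σ a = m} = {Fin.elim0} := by
      ext σ
      simp [blockMaps, hm, Subsingleton.elim σ Fin.elim0]
    rw [this, Set.ncard_singleton, if_pos hm, Nat.cast_one]
  · simp [hm, Ne.symm hm]

/-- Appending a zero entry. -/
def snocZero {N : ℕ} (σ : Fin N → ℕ) : Fin (N + 1) → ℕ := Fin.snoc (α := fun _ => ℕ) σ 0

/-- Adding one to every entry. -/
def shiftOne {N : ℕ} (σ : Fin N → ℕ) : Fin N → ℕ := fun i => σ i + 1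

/-- Adding one to every entry and inserting a zero just before the last entry. -/
def insertZero {N : ℕ} (σ : Fin (N + 1) → ℕ) : Fin (N + 2) → ℕ :=
  Fin.snoc (α := fun _ => ℕ) (snocZero fun i => σ i.castSucc + 1) (σ (Fin.last N) + 1)

theorem snocZero_injective {N : ℕ} : Function.Injective (snocZero (N := N)) := fun σ τ h => by
  funext i
  simpa [snocZero] using congrFun h i.castSucc

theorem shiftOne_injective {N : ℕ} : Function.Injective (shiftOne (N := N)) := fun σ τ h => by
  funext i
  simpa [shiftOne] using congrFun h i

theorem insertZero_injective {N : ℕ} : Function.Injective (insertZero (N := N)) := fun σ τ h => by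
  funext i
  induction i using Fin.lastCases with
  | last => simpa [insertZero] using congrFun h (Fin.last (N + 1))
  | cast i => simpa [insertZero, snocZero] using congrFun h i.castSucc.castSucc

theorem sum_snocZero {N : ℕ} (σ : Fin N → ℕ) : ∑ a, snocZero σ a = ∑ a, σ a + 0 := by
  simp [snocZero, Fin.sum_univ_castSucc]

theorem sum_shiftOne {N : ℕ} (σ : Fin N → ℕ) : ∑ a, shiftOne σ a = ∑ a, σ a + N := by
  simp [shiftOne, Finset.sum_add_distrib]

theorem sum_insertZero {N : ℕ} (σ : Fin (N + 1) → ℕ) :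
    ∑ a, insertZero σ a = ∑ a, σ a + (N + 1) := by
  simp [insertZero, snocZero, Fin.sum_univ_castSucc, Finset.sum_add_distrib]
  omega

theorem shiftOne_mem_blockMaps {N : ℕ} {σ : Fin N → ℕ} :
    shiftOne σ ∈ blockMaps N ↔ σ ∈ blockMaps N := by
  simp [shiftOne, blockMaps]

theorem snocZero_mem_blockMaps {N : ℕ} {σ : Fin N → ℕ} :
    snocZero σ ∈ blockMaps (N + 1) ↔ σ ∈ blockMaps N := by
  constructor
  · intro h i j hij
    simpa [snocZero] using h i.castSucc j.castSucc hij
  · intro h i j hij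
    induction j using Fin.lastCases with
    | last => simp [snocZero]
    | cast j =>
      induction i using Fin.lastCases with
      | last =>
        simp only [Fin.val_last, Fin.val_castSucc] at hij
        omega
      | cast i => simpa [snocZero] using h i j hij

theorem insertZero_mem_blockMaps {k : ℕ} {σ : Fin (2 * k + 2) → ℕ} :
    insertZero σ ∈ blockMaps (2 * k + 3) ↔ σ ∈ blockMaps (2 * k + 2) := by
  constructor
  · intro h i j hij
    induction i using Fin.lastCases with
    | last => simp only [Fin.val_last] at hij; omega
    | cast i =>
      induction j using Fin.lastCases with
      | last =>
        simpa [insertZero, snocZero] using h i.castSucc.castSucc (Fin.last _)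
          (by simp only [Fin.val_last, Fin.val_castSucc] at hij ⊢; omega)
      | cast j =>
        simpa [insertZero, snocZero] using h i.castSucc.castSucc j.castSucc.castSucc hij
  · intro h i j hij
    induction i using Fin.lastCases with
    | last => simp only [Fin.val_last] at hij; omega
    | cast i =>
      induction i using Fin.lastCases with
      | last => simp only [Fin.val_last, Fin.val_castSucc] at hij; omega
      | cast i =>
        induction j using Fin.lastCases with
        | last =>
          simpa [insertZero, snocZero] using h i.castSucc (Fin.last _)
            (by simp only [Fin.val_last, Fin.val_castSucc] at hij ⊢; omega)
        | cast j =>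
          induction j using Fin.lastCases with
          | last => simp [insertZero, snocZero]
          | cast j => simpa [insertZero, snocZero] using h i.castSucc j.castSucc hij

theorem exists_snocZero_eq {N : ℕ} {σ : Fin (N + 1) → ℕ} (h : σ (Fin.last N) = 0) :
    ∃ τ, snocZero τ = σ :=
  ⟨Fin.init σ, by rw [snocZero, ← h]; exact Fin.snoc_init_self σ⟩

theorem exists_shiftOne_eq {N : ℕ} {σ : Fin N → ℕ} (h : ∀ i, σ i ≠ 0) : ∃ τ, shiftOne τ = σ :=
  ⟨fun i => σ i - 1, funext fun i => Nat.succ_pred_eq_of_ne_zero (h i)⟩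

theorem exists_insertZero_eq {N : ℕ} {σ : Fin (N + 2) → ℕ} (h : σ (Fin.last N).castSucc = 0)
    (h' : ∀ i, i ≠ (Fin.last N).castSucc → σ i ≠ 0) : ∃ τ, insertZero τ = σ := by
  refine ⟨Fin.snoc (α := fun _ => ℕ) (fun i : Fin N => σ i.castSucc.castSucc - 1)
    (σ (Fin.last _) - 1), funext fun i => ?_⟩
  induction i using Fin.lastCases with
  | last =>
    have := h' (Fin.last _) (Fin.castSucc_lt_last _).ne'
    simp [insertZero]
    omega
  | cast i =>
    induction i using Fin.lastCases with
    | last => simp [insertZero, snocZero, h]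
    | cast i =>
      have := h' i.castSucc.castSucc
        fun e => (Fin.castSucc_lt_last i).ne (Fin.castSucc_injective _ e)
      simp [insertZero, snocZero]
      omega

/-- If the last element is a singleton block, it carries the minimum. -/
theorem sumGF_blockMaps_succ_of_singleton {N : ℕ} (hN : ∀ i < N, (i + 1) / 2 < (N + 1) / 2) :
    sumGF (blockMaps (N + 1)) * (1 - PowerSeries.X ^ (N + 1)) = sumGF (blockMaps N) := by
  have hU : blockMaps (N + 1) = snocZero '' blockMaps N ∪ shiftOne '' blockMaps (N + 1) := by
    ext σ
    constructor
    · intro hσ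
      by_cases h : σ (Fin.last N) = 0
      · obtain ⟨τ, rfl⟩ := exists_snocZero_eq h
        exact Or.inl ⟨τ, snocZero_mem_blockMaps.1 hσ, rfl⟩
      · obtain ⟨τ, rfl⟩ := exists_shiftOne_eq (σ := σ) fun i => by
          induction i using Fin.lastCases with
          | last => exact h
          | cast i =>
            have := hσ i.castSucc (Fin.last N) (by simpa using hN i i.2)
            omega
        exact Or.inr ⟨τ, shiftOne_mem_blockMaps.1 hσ, rfl⟩
    · rintro (⟨τ, hτ, rfl⟩ | ⟨τ, hτ, rfl⟩)
      · exact snocZero_mem_blockMaps.2 hτ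
      · exact shiftOne_mem_blockMaps.2 hτ
  have hD : Disjoint (snocZero '' blockMaps N) (shiftOne '' blockMaps (N + 1)) := by
    rw [Set.disjoint_left]
    rintro _ ⟨σ, -, rfl⟩ ⟨τ, -, h⟩
    simpa [snocZero, shiftOne] using congrFun h (Fin.last N)
  have key := congrArg sumGF hU
  rw [sumGF_union hD, sumGF_image 0 snocZero_injective sum_snocZero,
    sumGF_image (N + 1) shiftOne_injective sum_shiftOne] at key
  linear_combination key

/-- If the last two elements form a block, one of them carries the minimum. -/
theorem sumGF_blockMaps_of_pair (k : ℕ) :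
    sumGF (blockMaps (2 * k + 3)) * (1 - PowerSeries.X ^ (2 * k + 3)) =
      sumGF (blockMaps (2 * k + 2)) * (1 + PowerSeries.X ^ (2 * k + 2)) := by
  have hU : blockMaps (2 * k + 3) = (snocZero '' blockMaps (2 * k + 2) ∪
      insertZero '' blockMaps (2 * k + 2)) ∪ shiftOne '' blockMaps (2 * k + 3) := by
    ext σ
    constructor
    · intro hσ
      by_cases h : σ (Fin.last _) = 0
      · obtain ⟨τ, rfl⟩ := exists_snocZero_eq h
        exact Or.inl (Or.inl ⟨τ, snocZero_mem_blockMaps.1 hσ, rfl⟩)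
      have hpos : ∀ i, i ≠ (Fin.last (2 * k + 1)).castSucc → σ i ≠ 0 := fun i hi => by
        induction i using Fin.lastCases with
        | last => exact h
        | cast i =>
          induction i using Fin.lastCases with
          | last => exact absurd rfl hi
          | cast i =>
            have := hσ i.castSucc.castSucc (Fin.last _)
              (by simp only [Fin.val_last, Fin.val_castSucc]; omega)
            omega
      by_cases h' : σ (Fin.last (2 * k + 1)).castSucc = 0
      · obtain ⟨τ, rfl⟩ := exists_insertZero_eq h' hpos
        exact Or.inl (Or.inr ⟨τ, insertZero_mem_blockMaps.1 hσ, rfl⟩)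
      · obtain ⟨τ, rfl⟩ := exists_shiftOne_eq (σ := σ) fun i => by
          by_cases hi : i = (Fin.last (2 * k + 1)).castSucc
          · rwa [hi]
          · exact hpos i hi
        exact Or.inr ⟨τ, shiftOne_mem_blockMaps.1 hσ, rfl⟩
    · rintro ((⟨τ, hτ, rfl⟩ | ⟨τ, hτ, rfl⟩) | ⟨τ, hτ, rfl⟩)
      · exact snocZero_mem_blockMaps.2 hτ
      · exact insertZero_mem_blockMaps.2 hτ
      · exact shiftOne_mem_blockMaps.2 hτ
  have hD : Disjoint (snocZero '' blockMaps (2 * k + 2)) (insertZero '' blockMaps (2 * k + 2)) := by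
    rw [Set.disjoint_left]
    rintro _ ⟨σ, -, rfl⟩ ⟨τ, -, h⟩
    simpa [snocZero, insertZero] using congrFun h (Fin.last _)
  have hD' : Disjoint (snocZero '' blockMaps (2 * k + 2) ∪ insertZero '' blockMaps (2 * k + 2))
      (shiftOne '' blockMaps (2 * k + 3)) := by
    rw [Set.disjoint_left]
    rintro _ (⟨σ, -, rfl⟩ | ⟨σ, -, rfl⟩) ⟨τ, -, h⟩
    · simpa [snocZero, shiftOne] using congrFun h (Fin.last _)
    · simpa [snocZero, insertZero, shiftOne] using congrFun h (Fin.last _).castSucc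
  have key := congrArg sumGF hU
  rw [sumGF_union hD', sumGF_union hD, sumGF_image 0 snocZero_injective sum_snocZero,
    sumGF_image (2 * k + 2) insertZero_injective sum_insertZero,
    sumGF_image (2 * k + 3) shiftOne_injective sum_shiftOne] at key
  linear_combination key

theorem sumGF_blockMaps_mul_prod (k : ℕ) :
    sumGF (blockMaps (2 * k + 2)) *
        ∏ j ∈ Finset.Icc 1 (2 * k + 2), (1 - (PowerSeries.X : PowerSeries ℤ) ^ j) =
      ∏ j ∈ Finset.Icc 1 k, (1 + (PowerSeries.X : PowerSeries ℤ) ^ (2 * j)) := by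
  induction k with
  | zero =>
    have h1 := sumGF_blockMaps_succ_of_singleton (N := 1) (by omega)
    have h0 := sumGF_blockMaps_succ_of_singleton (N := 0) (by omega)
    rw [sumGF_blockMaps_zero] at h0
    simp only [mul_zero, zero_add, Finset.prod_Icc_succ_top (show 1 ≤ 1 + 1 by omega),
      Finset.Icc_self, Finset.prod_singleton, Nat.reduceAdd] at h0 h1 ⊢
    simp only [Finset.Icc_eq_empty_of_lt zero_lt_one, Finset.prod_empty]
    linear_combination (1 - PowerSeries.X ^ 1) * h1 + h0
  | succ k ih =>
    have h4 := sumGF_blockMaps_succ_of_singleton (N := 2 * k + 3) (by omega)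
    have h3 := sumGF_blockMaps_of_pair k
    rw [show 2 * (k + 1) + 2 = 2 * k + 2 + 1 + 1 by ring, Finset.prod_Icc_succ_top (by omega),
      Finset.prod_Icc_succ_top (by omega), Finset.prod_Icc_succ_top (by omega : 1 ≤ k + 1), ← ih,
      mul_add 2 k 1]
    set p := ∏ j ∈ Finset.Icc 1 (2 * k + 2), (1 - (PowerSeries.X : PowerSeries ℤ) ^ j)
    linear_combination p * (1 - PowerSeries.X ^ (2 * k + 3)) * h4 + p * h3

/-- `f_{P_n}(q) ∏_{k=1}^{2n} (1 - q^k) = ∏_{k=1}^{n-1} (1 + q^{2k})`. -/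
theorem two_rowed_q_gf (n : ℕ) (hn : 2 ≤ n) :
    fPq n * ∏ k ∈ Finset.Icc 1 (2 * n), (1 - (PowerSeries.X : PowerSeries ℤ) ^ k) =
      ∏ k ∈ Finset.Icc 1 (n - 1), (1 + (PowerSeries.X : PowerSeries ℤ) ^ (2 * k)) := by
  obtain ⟨k, rfl⟩ := Nat.exists_eq_add_of_le' (show 1 ≤ n by omega)
  rw [fPq_eq_sumGF (by omega)]
  exact sumGF_blockMaps_mul_prod k
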